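/- Suppose that ε_ħ/ħ² → ∞ and ε_ħ ħ^{−3/2} → 0 as ħ → 0⁺. Then for the periodized coherent state ψ_ħ with ξ₀ ≠ 0, for every primitive rank-1 sublattice Λ ⊆ ℤ² and every smooth compactly supported a : 𝕋² × ℝ → ℂ, one has W_{Λ,ħ}(a) → 0 as ħ → 0⁺. -/

import Mathlib

open MeasureTheory Filter Real
open scoped Topology

noncomputable section

/-- The Euclidean inner product on `ℝ²`. -/
def dot2 (v w : ℝ × ℝ) : ℝ := v.1 * w.1 + v.2 * w.2

/-- The Euclidean norm on `ℝ²`. -/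
def nrm2 (v : ℝ × ℝ) : ℝ := Real.sqrt (dot2 v v)

/-- The canonical embedding `ℤ² ↪ ℝ²`. -/
def toR2 (m : ℤ × ℤ) : ℝ × ℝ := ((m.1 : ℝ), (m.2 : ℝ))

/-- Rotation of an integer vector by `+π/2`. -/
def perpZ (v : ℤ × ℤ) : ℤ × ℤ := (-v.2, v.1)

/-- `v` generates a primitive rank-1 sublattice `Λ = ℤ v` of `ℤ²`. -/
def Primitive (v : ℤ × ℤ) : Prop := Int.gcd v.1 v.2 = 1

/-- `L_Λ = ‖v_Λ‖`. -/
def LL (v : ℤ × ℤ) : ℝ := nrm2 (toR2 v)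

/-- `H_Λ(ξ) = ⟨ξ, v_Λ⟩ / L_Λ`, where `v` is the generator `v_Λ` of `Λ`. -/
def HH (v : ℤ × ℤ) (ξ : ℝ × ℝ) : ℝ := dot2 ξ (toR2 v) / LL v

/-- Integral over a fundamental domain of the torus `𝕋² = ℝ²/ℤ²`. -/
def torusInt (f : ℝ × ℝ → ℂ) : ℂ :=
  ∫ x in Set.Icc ((0, 0) : ℝ × ℝ) ((1, 1) : ℝ × ℝ), f x

/-- `e^{it}`. -/
def expI (t : ℝ) : ℂ := Complex.exp (Complex.I * (t : ℂ))

/-- The `j`-th Fourier coefficient (in `x`) of `a : 𝕋² × ℝ → ℂ`: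
`â(j, η) = ∫_{𝕋²} a(x, η) e^{-2πi j·x} dx`. -/
def fcoef (a : ℝ × ℝ → ℝ → ℂ) (j : ℤ × ℤ) (η : ℝ) : ℂ :=
  torusInt fun x => a x η * expI (-(2 * π * dot2 (toR2 j) x))

/-- The Fourier transform on `ℝ²`: `φ̂(ξ) = ∫_{ℝ²} φ(x) e^{-2πi x·ξ} dx`. -/
def FT (φ : ℝ × ℝ → ℂ) (ξ : ℝ × ℝ) : ℂ :=
  ∫ x : ℝ × ℝ, φ x * expI (-(2 * π * dot2 x ξ))

/-- The `m`-th Fourier coefficient of the periodized coherent state: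
`ψ̂_hb(m) = hb^{1/2} e^{-2πi (m - ξ₀/hb)·x₀} φ̂(hb^{1/2}(m - ξ₀/hb))`. -/
def psiF (φ : ℝ × ℝ → ℂ) (x₀ ξ₀ : ℝ × ℝ) (hb : ℝ) (m : ℤ × ℤ) : ℂ :=
  (Real.sqrt hb : ℂ) * expI (-(2 * π * dot2 (toR2 m - hb⁻¹ • ξ₀) x₀)) *
    FT φ (Real.sqrt hb • (toR2 m - hb⁻¹ • ξ₀))

/-- The two-microlocal quantity
`W_{Λ,hb}(a) = Σ_{m ∈ ℤ²} Σ_{j ∈ Λ} conj(ψ̂_hb(m)) ψ̂_hb(m−j) â(j, 2π hb² ε_hb⁻¹ H_Λ(m))`,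
for the periodized coherent state, where `Λ = ℤ w` and `e = ε_hb`. -/
def Wcs (φ : ℝ × ℝ → ℂ) (x₀ ξ₀ : ℝ × ℝ) (w : ℤ × ℤ) (a : ℝ × ℝ → ℝ → ℂ)
    (hb e : ℝ) : ℂ :=
  ∑' m : ℤ × ℤ, ∑' c : ℤ,
    (starRingEnd ℂ) (psiF φ x₀ ξ₀ hb m) * psiF φ x₀ ξ₀ hb (m - c • w) *
      fcoef a (c • w) (2 * π * hb ^ 2 / e * HH w (toR2 m))

/-- The average of `a` along the periodic flow in the direction `v_Λ^⊥/L_Λ`: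
`I_Λ(a)(x, η) = L_Λ⁻¹ ∫₀^{L_Λ} a(x + t v_Λ^⊥/L_Λ, η) dt`. -/
def IΛ (w : ℤ × ℤ) (a : ℝ × ℝ → ℝ → ℂ) (x : ℝ × ℝ) (η : ℝ) : ℂ :=
  ((LL w : ℝ) : ℂ)⁻¹ * ∫ t in (0:ℝ)..(LL w), a (x + (t / LL w) • toR2 (perpZ w)) η


lemma norm_expI (t : ℝ) : ‖expI t‖ = 1 := by
  unfold expI; rw [mul_comm]; exact Complex.norm_exp_ofReal_mul_I t

lemma continuous_expI : Continuous expI := by unfold expI; fun_prop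

lemma expI_add (s t : ℝ) : expI (s + t) = expI s * expI t := by
  unfold expI; rw [← Complex.exp_add]; push_cast; ring_nf

lemma expI_int (n : ℤ) : expI (-(2 * π * n)) = 1 := by
  unfold expI
  rw [Complex.exp_eq_one_iff]
  exact ⟨-n, by push_cast; ring⟩

lemma parts_step (g g' : ℝ → ℂ) (hg : ∀ s, HasDerivAt g (g' s) s) (hg' : Continuous g')
    (h01 : g 1 = g 0) (n : ℤ) (hn : n ≠ 0) :
    ∫ s in (0:ℝ)..1, g s * expI (-(2 * π * (n * s))) =
      (1 / (2 * π * Complex.I * n)) * ∫ s in (0:ℝ)..1, g' s * expI (-(2 * π * (n * s))) := by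
  set k : ℂ := -(2 * π * Complex.I * n) with hk
  have hk0 : k ≠ 0 := by
    simp [hk, hn, Real.pi_ne_zero]
  have hv : ∀ s : ℝ, HasDerivAt (fun s : ℝ => k⁻¹ * expI (-(2 * π * (n * s))))
      (expI (-(2 * π * (n * s)))) s := by
    intro s
    have h1 : HasDerivAt (fun s : ℝ => k * (s : ℂ)) k s := by
      simpa using (Complex.ofRealCLM.hasDerivAt (x := s)).const_mul k
    have h2 := (h1.cexp).const_mul k⁻¹
    have e : ∀ s : ℝ, expI (-(2 * π * (n * s))) = Complex.exp (k * s) := by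
      intro s; unfold expI; congr 1; rw [hk]; push_cast; ring
    simp only [e]
    rwa [mul_comm _ k, inv_mul_cancel_left₀ hk0] at h2
  have hc : Continuous fun s : ℝ => expI (-(2 * π * (n * s))) :=
    continuous_expI.comp (by fun_prop)
  rw [intervalIntegral.integral_mul_deriv_eq_deriv_mul (fun s _ => hg s) (fun s _ => hv s)
    (hg'.intervalIntegrable _ _) (hc.intervalIntegrable _ _)]
  have e1 : expI (-(2 * π * ((n:ℝ) * 1))) = 1 := by rw [mul_one]; exact expI_int n
  have e0 : expI (-(2 * π * ((n:ℝ) * 0))) = 1 := by simp [expI]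
  rw [e1, e0, h01, sub_self, zero_sub, ← intervalIntegral.integral_const_mul,
    ← intervalIntegral.integral_neg]
  congr 1
  ext s
  have : 1 / (2 * π * Complex.I * n) = - k⁻¹ := by rw [hk, ← inv_neg, neg_neg, one_div]
  rw [this]; ring

lemma coef_1d (g g' g'' : ℝ → ℂ) (hg : ∀ s, HasDerivAt g (g' s) s)
    (hg' : ∀ s, HasDerivAt g' (g'' s) s) (hg'' : Continuous g'')
    (h01 : g 1 = g 0) (h01' : g' 1 = g' 0) (n : ℤ) (hn : n ≠ 0) (M : ℝ)
    (hM : ∀ s ∈ Set.Icc (0:ℝ) 1, ‖g'' s‖ ≤ M) :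
    ‖∫ s in (0:ℝ)..1, g s * expI (-(2 * π * (n * s)))‖ ≤ M / (n:ℝ) ^ 2 := by
  have hc' : Continuous g' := continuous_iff_continuousAt.2 fun s => (hg' s).continuousAt
  rw [parts_step g g' hg hc' h01 n hn, parts_step g' g'' hg' hg'' h01' n hn]
  have hb : ‖∫ s in (0:ℝ)..1, g'' s * expI (-(2 * π * (n * s)))‖ ≤ M := by
    have := intervalIntegral.norm_integral_le_of_norm_le_const (a := (0:ℝ)) (b := 1) (C := M)
      (f := fun s => g'' s * expI (-(2 * π * (n * s)))) (by
        intro s hs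
        rw [Set.uIoc_of_le zero_le_one] at hs
        rw [norm_mul, norm_expI, mul_one]
        exact hM s ⟨hs.1.le, hs.2⟩)
    simpa using this
  have hM0 : 0 ≤ M := (norm_nonneg _).trans hb
  have hnr : (n:ℝ) ≠ 0 := by exact_mod_cast hn
  have hn2 : 0 < (n:ℝ) ^ 2 := by positivity
  have hn1 : 0 < |(n:ℝ)| := by positivity
  have hk : ‖(1 / (2 * π * Complex.I * n) : ℂ)‖ ≤ 1 / |(n:ℝ)| := by
    rw [norm_div, norm_mul, norm_mul, norm_mul]
    simp only [norm_one, Complex.norm_I, mul_one, Complex.norm_intCast, Complex.norm_real]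
    apply one_div_le_one_div_of_le hn1
    rw [Real.norm_of_nonneg pi_pos.le]
    have : (1:ℝ) ≤ ‖(2:ℂ)‖ * π := by
      simp; nlinarith [pi_gt_three]
    nlinarith
  rw [norm_mul, norm_mul]
  calc _ ≤ 1 / |(n:ℝ)| * (1 / |(n:ℝ)| * M) := by gcongr
    _ = M / (n:ℝ) ^ 2 := by rw [← sq_abs]; field_simp

lemma torusInt_eq (f : ℝ × ℝ → ℂ) (hf : Continuous f) :
    torusInt f = ∫ x in (0:ℝ)..1, ∫ y in (0:ℝ)..1, f (x, y) := by
  unfold torusInt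
  rw [Set.Icc_prod_eq, Measure.volume_eq_prod, setIntegral_prod]
  · simp only [intervalIntegral.integral_of_le zero_le_one, integral_Icc_eq_integral_Ioc]
  · exact hf.continuousOn.integrableOn_compact (isCompact_Icc.prod isCompact_Icc)

lemma decay_snd (a : ℝ × ℝ → ℝ → ℂ)
    (ha_smooth : ContDiff ℝ (⊤ : ℕ∞) fun p : (ℝ × ℝ) × ℝ => a p.1 p.2)
    (ha_per : ∀ (x : ℝ × ℝ) (η : ℝ) (j : ℤ × ℤ), a (x + toR2 j) η = a x η)
    (R : ℝ) (hR : ∀ (x : ℝ × ℝ) (η : ℝ), R ≤ |η| → a x η = 0) :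
    ∃ M : ℝ, 0 ≤ M ∧ ∀ (j : ℤ × ℤ) (η : ℝ),  j.2 ≠ 0 → ‖fcoef a j η‖ ≤ M / (j.2:ℝ) ^ 2 := by
  set F : (ℝ × ℝ) × ℝ → ℂ := fun p => a p.1 p.2 with hF
  set e : (ℝ × ℝ) × ℝ := ((0, 1), 0) with he
  set D1 : (ℝ × ℝ) × ℝ → ℂ := fun p => fderiv ℝ F p e with hD1
  set D2 : (ℝ × ℝ) × ℝ → ℂ := fun p => fderiv ℝ D1 p e with hD2
  have sD1 : ContDiff ℝ (⊤ : ℕ∞) D1 :=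
    (ha_smooth.fderiv_right (m := (⊤ : ℕ∞)) (by simp)).clm_apply contDiff_const
  have sD2 : ContDiff ℝ (⊤ : ℕ∞) D2 :=
    (sD1.fderiv_right (m := (⊤ : ℕ∞)) (by simp)).clm_apply contDiff_const
  have line : ∀ (x η s : ℝ), HasDerivAt (fun s : ℝ => (((x, s), η) : (ℝ × ℝ) × ℝ)) e s := by
    intro x η s
    exact (((hasDerivAt_const s x).prodMk (hasDerivAt_id s)).prodMk (hasDerivAt_const s η))
  have d1 : ∀ (x η s : ℝ), HasDerivAt (fun s : ℝ => F ((x, s), η)) (D1 ((x, s), η)) s := by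
    intro x η s
    exact ((ha_smooth.differentiable (by simp)) ((x, s), η)).hasFDerivAt.comp_hasDerivAt s
      (line x η s)
  have d2 : ∀ (x η s : ℝ), HasDerivAt (fun s : ℝ => D1 ((x, s), η)) (D2 ((x, s), η)) s := by
    intro x η s
    exact ((sD1.differentiable (by simp)) ((x, s), η)).hasFDerivAt.comp_hasDerivAt s
      (line x η s)
  have per : ∀ (x η s : ℝ), F ((x, s + 1), η) = F ((x, s), η) := by
    intro x η s
    have := ha_per (x, s) η (0, 1)
    simpa [toR2, hF] using this
  have per' : ∀ (x η : ℝ), D1 ((x, 1), η) = D1 ((x, 0), η) := by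
    intro x η
    rw [← (d1 x η 1).deriv, ← (d1 x η 0).deriv]
    have h := deriv_comp_add_const (fun s : ℝ => F ((x, s), η)) 1 0
    simp only [per, zero_add] at h
    exact h.symm
  obtain ⟨M, hM⟩ := ((isCompact_Icc (a := ((0:ℝ),(0:ℝ))) (b := ((1:ℝ),(1:ℝ)))).prod
    (isCompact_Icc (a := -R) (b := R))).exists_bound_of_continuousOn sD2.continuous.continuousOn
  refine ⟨max M 0, le_max_right _ _, fun j η hj => ?_⟩
  have hj2 : 0 < (j.2:ℝ)^2 := by
    have : (j.2:ℝ) ≠ 0 := by exact_mod_cast hj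
    positivity
  rcases le_or_gt R |η| with h | h
  · simp only [fcoef, hR _ η h, zero_mul, torusInt, integral_zero, norm_zero]
    positivity
  · have hca : Continuous fun x : ℝ × ℝ => a x η :=
      ha_smooth.continuous.comp (f := fun x : ℝ × ℝ => (x, η)) (by fun_prop)
    rw [fcoef, torusInt_eq]
    · have key : ∀ x ∈ Set.uIoc (0:ℝ) 1, ‖∫ y in (0:ℝ)..1,
          a (x, y) η * expI (-(2 * π * dot2 (toR2 j) (x, y)))‖ ≤ max M 0 / (j.2:ℝ)^2 := by
        intro x hx
        rw [Set.uIoc_of_le zero_le_one] at hx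
        have e1 : ∀ y : ℝ, a (x, y) η * expI (-(2 * π * dot2 (toR2 j) (x, y))) =
            expI (-(2 * π * (j.1 * x))) * (F ((x, y), η) * expI (-(2 * π * (j.2 * y)))) := by
          intro y
          have : -(2 * π * dot2 (toR2 j) (x, y)) =
              -(2 * π * (j.1 * x)) + -(2 * π * (j.2 * y)) := by
            simp only [dot2, toR2]; ring
          rw [this, expI_add]; simp only [hF]; ring
        simp only [e1]
        rw [intervalIntegral.integral_const_mul, norm_mul, norm_expI, one_mul]
        refine coef_1d _ _ _ (d1 x η) (d2 x η) (sD2.continuous.comp (by fun_prop))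
          (by simpa using per x η 0) (per' x η) j.2 hj _ ?_
        intro s hs
        refine (hM ((x, s), η) ⟨?_, ?_⟩).trans (le_max_left _ _)
        · exact ⟨⟨hx.1.le, hs.1⟩, ⟨hx.2, hs.2⟩⟩
        · exact ⟨(abs_lt.1 h).1.le, (abs_lt.1 h).2.le⟩
      simpa using intervalIntegral.norm_integral_le_of_norm_le_const key
    · exact hca.mul (continuous_expI.comp (by unfold dot2; fun_prop))

lemma decay_fst (a : ℝ × ℝ → ℝ → ℂ)
    (ha_smooth : ContDiff ℝ (⊤ : ℕ∞) fun p : (ℝ × ℝ) × ℝ => a p.1 p.2)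
    (ha_per : ∀ (x : ℝ × ℝ) (η : ℝ) (j : ℤ × ℤ), a (x + toR2 j) η = a x η)
    (R : ℝ) (hR : ∀ (x : ℝ × ℝ) (η : ℝ), R ≤ |η| → a x η = 0) :
    ∃ M : ℝ, 0 ≤ M ∧ ∀ (j : ℤ × ℤ) (η : ℝ),  j.1 ≠ 0 → ‖fcoef a j η‖ ≤ M / (j.1:ℝ) ^ 2 := by
  obtain ⟨M, hM0, hM⟩ := decay_snd (fun x η => a x.swap η)
    (ha_smooth.comp (f := fun p : (ℝ × ℝ) × ℝ => (p.1.swap, p.2))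
      ((contDiff_fst.snd.prodMk contDiff_fst.fst).prodMk contDiff_snd))
    (fun x η j => by simpa [toR2] using! ha_per x.swap η j.swap) R (fun x η h => hR _ _ h)
  refine ⟨M, hM0, fun j η hj => ?_⟩
  have := hM j.swap η hj
  have e : fcoef a j η = fcoef (fun x η => a x.swap η) j.swap η := ?_
  · rw [e]; exact this
  simp only [fcoef, torusInt]
  rw [Set.Icc_prod_eq, Measure.volume_eq_prod, ← setIntegral_prod_swap]
  simp [dot2, toR2, add_comm]

lemma fcoef_zero (a : ℝ × ℝ → ℝ → ℂ) (R : ℝ)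
    (hR : ∀ (x : ℝ × ℝ) (η : ℝ), R ≤ |η| → a x η = 0) (j : ℤ × ℤ) (η : ℝ) (h : R ≤ |η|) :
    fcoef a j η = 0 := by
  simp only [fcoef, hR _ η h, zero_mul, torusInt, integral_zero]

lemma fcoef_bdd (a : ℝ × ℝ → ℝ → ℂ)
    (ha_smooth : ContDiff ℝ (⊤ : ℕ∞) fun p : (ℝ × ℝ) × ℝ => a p.1 p.2)
    (R : ℝ) (hR : ∀ (x : ℝ × ℝ) (η : ℝ), R ≤ |η| → a x η = 0) :
    ∃ M : ℝ, 0 ≤ M ∧ ∀ (j : ℤ × ℤ) (η : ℝ), ‖fcoef a j η‖ ≤ M := by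
  obtain ⟨M, hM⟩ := ((isCompact_Icc (a := ((0:ℝ),(0:ℝ))) (b := ((1:ℝ),(1:ℝ)))).prod
    (isCompact_Icc (a := -R) (b := R))).exists_bound_of_continuousOn
      ha_smooth.continuous.continuousOn
  refine ⟨max M 0, le_max_right _ _, fun j η => ?_⟩
  rcases le_or_gt R |η| with h | h
  · rw [fcoef_zero a R hR j η h, norm_zero]; positivity
  · unfold fcoef torusInt
    have := norm_setIntegral_le_of_norm_le_const (μ := (volume : Measure (ℝ × ℝ)))
      (s := Set.Icc ((0, 0) : ℝ × ℝ) (1, 1)) (C := max M 0)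
      (f := fun x => a x η * expI (-(2 * π * dot2 (toR2 j) x)))
      isCompact_Icc.measure_lt_top (by
        intro x hx
        rw [norm_mul, norm_expI, mul_one]
        exact (hM (x, η) ⟨hx, (abs_lt.1 h).1.le, (abs_lt.1 h).2.le⟩).trans (le_max_left _ _))
    refine this.trans ?_
    have hv : volume.real (Set.Icc ((0, 0) : ℝ × ℝ) (1, 1)) = 1 := by
      rw [Set.Icc_prod_eq, Measure.volume_eq_prod, measureReal_prod_prod]; simp
    rw [hv, mul_one]

lemma fcoef_decay (a : ℝ × ℝ → ℝ → ℂ)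
    (ha_smooth : ContDiff ℝ (⊤ : ℕ∞) fun p : (ℝ × ℝ) × ℝ => a p.1 p.2)
    (ha_per : ∀ (x : ℝ × ℝ) (η : ℝ) (j : ℤ × ℤ), a (x + toR2 j) η = a x η)
    (R : ℝ) (hR : ∀ (x : ℝ × ℝ) (η : ℝ), R ≤ |η| → a x η = 0) (w : ℤ × ℤ) (hw : w ≠ 0) :
    ∃ C : ℝ, 0 ≤ C ∧ ∀ (c : ℤ) (η : ℝ), ‖fcoef a (c • w) η‖ ≤ C * (1 + (c:ℝ) ^ 2)⁻¹ := by
  obtain ⟨M₁, h1, H1⟩ := decay_fst a ha_smooth ha_per R hR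
  obtain ⟨M₂, h2, H2⟩ := decay_snd a ha_smooth ha_per R hR
  obtain ⟨M₀, h0, H0⟩ := fcoef_bdd a ha_smooth R hR
  refine ⟨M₀ + 2 * M₁ + 2 * M₂, by positivity, fun c η => ?_⟩
  rcases eq_or_ne c 0 with rfl | hc
  · refine (H0 _ _).trans ?_
    simp; linarith
  have hc1 : (1:ℝ) ≤ (c:ℝ) ^ 2 := by
    have : (1:ℤ) ≤ c ^ 2 := Int.one_le_abs (pow_ne_zero 2 hc) |>.trans_eq (abs_of_nonneg (sq_nonneg c))
    exact_mod_cast this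
  have aux : ∀ (M : ℝ) (k : ℤ), 0 ≤ M → k ≠ 0 → 
      M / (((c * k : ℤ) : ℝ)) ^ 2 ≤ 2 * M * (1 + (c:ℝ) ^ 2)⁻¹ := by
    intro M k hM hk
    have hk1 : (1:ℝ) ≤ (k:ℝ) ^ 2 := by
      have : (1:ℤ) ≤ k ^ 2 := Int.one_le_abs (pow_ne_zero 2 hk) |>.trans_eq (abs_of_nonneg (sq_nonneg k))
      exact_mod_cast this
    rw [← div_eq_mul_inv, div_le_div_iff₀ (by push_cast; positivity) (by positivity)]
    push_cast
    have : (1 + (c:ℝ)^2) ≤ 2 * ((c:ℝ) * k)^2 := by rw [mul_pow]; nlinarith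
    nlinarith
  have hinv : 0 ≤ (1 + (c:ℝ) ^ 2)⁻¹ := by positivity
  have hd : w.1 ≠ 0 ∨ w.2 ≠ 0 := by
    by_contra! h
    exact hw (Prod.ext h.1 h.2)
  rcases hd with hd | hd
  · refine (H1 (c • w) η (by simp [hc, hd])).trans ?_
    refine le_trans (by simpa using aux M₁ w.1 h1 hd) ?_
    gcongr
    linarith
  · refine (H2 (c • w) η (by simp [hc, hd])).trans ?_
    refine le_trans (by simpa using aux M₂ w.2 h2 hd) ?_
    gcongr
    linarith

lemma sum_bound (s q : ℝ) (hs : 0 < s) (hs1 : s ≤ 1) :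
    ∃ S : ℝ, HasSum (fun p : ℤ => (1 + (s * (p - q)) ^ 2)⁻¹) S ∧ S ≤ 3 * π / s := by
  have hi0 : Integrable fun y : ℝ => (1 + (s * y) ^ 2)⁻¹ :=
    integrable_inv_one_add_sq.comp_mul_left' hs.ne'
  have hi : Integrable fun y : ℝ => (1 + (s * (y - q)) ^ 2)⁻¹ := hi0.comp_sub_right q
  have hval : ∫ y : ℝ, (1 + (s * (y - q)) ^ 2)⁻¹ = π / s := by
    rw [integral_sub_right_eq_self (fun y : ℝ => (1 + (s * y) ^ 2)⁻¹) q,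
      Measure.integral_comp_mul_left (fun y : ℝ => (1 + y ^ 2)⁻¹) s,
      integral_univ_inv_one_add_sq, abs_of_pos (inv_pos.2 hs), smul_eq_mul]
    field_simp
  have hS := (hi.hasSum_intervalIntegral 0).mul_left 3
  rw [hval] at hS
  have hle : ∀ p : ℤ, (1 + (s * (p - q)) ^ 2)⁻¹ ≤
      3 * ∫ y in (0 + (p:ℝ))..(0 + p + 1), (1 + (s * (y - q)) ^ 2)⁻¹ := by
    intro p
    rw [← intervalIntegral.integral_const_mul]
    have h := intervalIntegral.integral_mono_on (μ := volume) (a := 0 + (p:ℝ)) (b := 0 + p + 1)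
      (f := fun _ => (1 + (s * (p - q)) ^ 2)⁻¹)
      (g := fun y => 3 * (1 + (s * (y - q)) ^ 2)⁻¹) (by linarith) (by simp)
      ((hi.const_mul 3).intervalIntegrable) (by
        intro y hy
        have h1 : 0 ≤ y - p := by linarith [hy.1]
        have h2 : y - p ≤ 1 := by linarith [hy.2]
        rw [← div_eq_mul_inv, inv_eq_one_div, div_le_div_iff₀ (by positivity) (by positivity)]
        have h3 : (s * (y - p)) ^ 2 ≤ 1 := by
          have : s * (y - p) ≤ 1 := by nlinarith
          have : 0 ≤ s * (y - p) := by positivity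
          nlinarith
        have h4 : s * (y - q) = s * (y - p) + s * (p - q) := by ring
        rw [h4]
        nlinarith [sq_nonneg (s * (y - p) - s * (p - q)), sq_nonneg (s * (p - q))])
    simpa using h
  have hsum : Summable fun p : ℤ => (1 + (s * (p - q)) ^ 2)⁻¹ :=
    Summable.of_nonneg_of_le (fun p => by positivity) hle hS.summable
  refine ⟨_, hsum.hasSum, ?_⟩
  have := hasSum_le hle hsum.hasSum hS
  rwa [mul_div_assoc]

open scoped FourierTransform in
lemma FT_decay (φ : ℝ × ℝ → ℂ) (hφ_smooth : ContDiff ℝ (⊤ : ℕ∞) φ)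
    (hφ_supp : ∀ x : ℝ × ℝ, φ x ≠ 0 → |x.1| < 1/2 ∧ |x.2| < 1/2) (v : ℝ × ℝ) :
    ∃ C : ℝ, 0 ≤ C ∧ ∀ ξ, ‖FT φ ξ‖ ≤ C * (1 + (dot2 v ξ) ^ 2)⁻¹ := by
  have hcs : HasCompactSupport φ := by
    refine HasCompactSupport.intro (K := Set.Icc (-1, -1) (1, 1)) isCompact_Icc ?_
    intro x hx
    by_contra h
    have := hφ_supp x h
    rw [abs_lt, abs_lt] at this
    exact hx ⟨⟨by linarith [this.1.1], by linarith [this.2.1]⟩,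
      ⟨by linarith [this.1.2], by linarith [this.2.2]⟩⟩
  let L : (ℝ × ℝ) →L[ℝ] (ℝ × ℝ) →L[ℝ] ℝ :=
    (ContinuousLinearMap.mul ℝ ℝ).bilinearComp (ContinuousLinearMap.fst ℝ ℝ ℝ)
      (ContinuousLinearMap.fst ℝ ℝ ℝ) +
    (ContinuousLinearMap.mul ℝ ℝ).bilinearComp (ContinuousLinearMap.snd ℝ ℝ ℝ)
      (ContinuousLinearMap.snd ℝ ℝ ℝ)
  have hL : ∀ x y, L x y = dot2 x y := fun x y => by simp [L, dot2]
  have hFT : ∀ ξ, FT φ ξ = VectorFourier.fourierIntegral 𝐞 volume L.toLinearMap₁₂ φ ξ := by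
    intro ξ
    unfold FT VectorFourier.fourierIntegral
    congr 1
    ext x
    have : L.toLinearMap₁₂ x ξ = dot2 x ξ := hL x ξ
    rw [this, Circle.smul_def, Real.fourierChar_apply, smul_eq_mul, mul_comm]
    congr 1
    unfold expI
    congr 1
    push_cast
    ring
  have hint : ∀ (k n : ℕ), k ≤ (⊤ : ℕ∞) → n ≤ (⊤ : ℕ∞) →
      Integrable (fun v ↦ ‖v‖ ^ k * ‖iteratedFDeriv ℝ n φ v‖) volume := by
    intro k n _ _
    refine Continuous.integrable_of_hasCompactSupport ?_ ?_
    · exact (continuous_norm.pow k).mul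
        (hφ_smooth.continuous_iteratedFDeriv (m := n) (by exact_mod_cast le_top)).norm
    · exact ((hcs.iteratedFDeriv n).norm).mul_left
  have B := fun n ξ => VectorFourier.pow_mul_norm_iteratedFDeriv_fourierIntegral_le (μ := volume)
    (K := ⊤) (N := ⊤) L hφ_smooth hint (k := 0) (n := n) le_top le_top v ξ
  have B0 := B 0
  have B2 := B 2
  simp only [norm_iteratedFDeriv_zero, ← hFT, hL] at B0 B2
  obtain ⟨C0, hC0⟩ : ∃ C0, ∀ ξ, |dot2 v ξ| ^ 0 * ‖FT φ ξ‖ ≤ C0 := ⟨_, B0⟩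
  obtain ⟨C2, hC2⟩ : ∃ C2, ∀ ξ, |dot2 v ξ| ^ 2 * ‖FT φ ξ‖ ≤ C2 := ⟨_, B2⟩
  have key : ∀ ξ, ‖FT φ ξ‖ ≤ (C0 + C2) * (1 + (dot2 v ξ) ^ 2)⁻¹ := by
    intro ξ
    have h0 := hC0 ξ
    have h2 := hC2 ξ
    rw [sq_abs] at h2
    rw [← div_eq_mul_inv, le_div_iff₀ (by positivity)]
    linarith
  refine ⟨C0 + C2, ?_, key⟩
  have h0 := (by positivity : (0:ℝ) ≤ |dot2 v 0| ^ 0 * ‖FT φ 0‖).trans (hC0 0)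
  have h2 := (by positivity : (0:ℝ) ≤ |dot2 v 0| ^ 2 * ‖FT φ 0‖).trans (hC2 0)
  linarith

lemma lattice_inj (w : ℤ × ℤ) (hw : w ≠ 0) :
    Function.Injective fun m : ℤ × ℤ => (m.1 * w.1 + m.2 * w.2, -w.2 * m.1 + w.1 * m.2) := by
  intro m m' h
  simp only [Prod.mk.injEq] at h
  obtain ⟨h1, h2⟩ := h
  have hN : w.1 ^ 2 + w.2 ^ 2 ≠ 0 := by
    intro h0
    apply hw
    have a1 : w.1 = 0 := by nlinarith [sq_nonneg w.1, sq_nonneg w.2]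
    have a2 : w.2 = 0 := by nlinarith [sq_nonneg w.1, sq_nonneg w.2]
    exact Prod.ext a1 a2
  refine Prod.ext (mul_left_cancel₀ hN ?_) (mul_left_cancel₀ hN ?_)
  · linear_combination w.1 * h1 - w.2 * h2
  · linear_combination w.2 * h1 + w.1 * h2

/-- Sum over the strip `|m·w| ≤ B`. -/
lemma strip_sum (w : ℤ × ℤ) (hw : w ≠ 0) (s q B : ℝ) (hs : 0 < s) (hs1 : s ≤ 1) (hB : 0 ≤ B) :
    ∃ S : ℝ, HasSum (fun m : ℤ × ℤ =>
      (if |((m.1 * w.1 + m.2 * w.2 : ℤ) : ℝ)| ≤ B then (1:ℝ) else 0) *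
        (1 + (s * (((-w.2 * m.1 + w.1 * m.2 : ℤ) : ℝ) - q)) ^ 2)⁻¹) S ∧
      S ≤ (2 * B + 1) * (3 * π / s) := by
  obtain ⟨T, hT, hTle⟩ := sum_bound s q hs hs1
  have hT0 : 0 ≤ T := hT.nonneg fun p => by positivity
  have hind : HasSum (fun n : ℤ => if |(n : ℝ)| ≤ B then (1:ℝ) else 0)
      (∑ n ∈ Finset.Icc (-⌊B⌋) ⌊B⌋, if |(n : ℝ)| ≤ B then (1:ℝ) else 0) := by
    apply hasSum_sum_of_ne_finset_zero
    intro n hn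
    rw [if_neg]
    intro h
    rw [abs_le] at h
    apply hn
    rw [Finset.mem_Icc]
    refine ⟨?_, Int.le_floor.2 h.2⟩
    have : -n ≤ ⌊B⌋ := Int.le_floor.2 (by push_cast; linarith)
    linarith
  have hcard : (∑ n ∈ Finset.Icc (-⌊B⌋) ⌊B⌋, if |(n : ℝ)| ≤ B then (1:ℝ) else 0) ≤ 2 * B + 1 := by
    refine (Finset.sum_le_card_nsmul _ _ 1 (fun n _ => by split_ifs <;> norm_num)).trans ?_
    rw [Int.card_Icc, nsmul_eq_mul, mul_one]
    have hf : 0 ≤ ⌊B⌋ := Int.floor_nonneg.2 hB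
    have : ((⌊B⌋ + 1 - -⌊B⌋).toNat : ℝ) = ((⌊B⌋ + 1 - -⌊B⌋ : ℤ) : ℝ) := by
      exact_mod_cast congrArg (Int.cast : ℤ → ℝ) (Int.toNat_of_nonneg (by linarith))
    rw [this]
    push_cast
    linarith [Int.floor_le B]
  have hprod := hind.mul hT (hind.summable.mul_of_nonneg hT.summable
    (fun n => by dsimp only [Pi.zero_apply]; split_ifs <;> norm_num)
    (fun p => by dsimp only [Pi.zero_apply]; positivity))
  have hs' := hprod.summable.comp_injective (lattice_inj w hw)
  refine ⟨_, hs'.hasSum, ?_⟩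
  refine (tsum_comp_le_tsum_of_inj hprod.summable ?_ (lattice_inj w hw)).trans ?_
  · intro x
    split_ifs <;> positivity
  · rw [hprod.tsum_eq]
    gcongr

lemma Wcs_bound (φ : ℝ × ℝ → ℂ) (x₀ ξ₀ : ℝ × ℝ) (a : ℝ × ℝ → ℝ → ℂ) (w : ℤ × ℤ) (hw : w ≠ 0)
    (R : ℝ) (hR0 : 0 ≤ R) (hR : ∀ (x : ℝ × ℝ) (η : ℝ), R ≤ |η| → a x η = 0)
    (Cf : ℝ) (hCf0 : 0 ≤ Cf)
    (hCf : ∀ ξ, ‖FT φ ξ‖ ≤ Cf * (1 + (dot2 (toR2 (perpZ w)) ξ) ^ 2)⁻¹)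
    (Ca : ℝ) (hCa0 : 0 ≤ Ca)
    (hCa : ∀ (c : ℤ) (η : ℝ), ‖fcoef a (c • w) η‖ ≤ Ca * (1 + (c:ℝ) ^ 2)⁻¹)
    (T : ℝ) (hT : HasSum (fun c : ℤ => (1 + (c:ℝ) ^ 2)⁻¹) T)
    (hb e : ℝ) (hb0 : 0 < hb) (hb1 : hb ≤ 1) (he : 0 < e) :
    ‖Wcs φ x₀ ξ₀ w a hb e‖ ≤ Cf ^ 2 * Ca * T * hb *
      ((2 * (R * LL w * e / (2 * π * hb ^ 2)) + 1) * (3 * π / √hb)) := by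
  have hs : 0 < √hb := Real.sqrt_pos.2 hb0
  have hs1 : √hb ≤ 1 := Real.sqrt_le_one.2 hb1
  have hss : √hb * √hb = hb := Real.mul_self_sqrt hb0.le
  have hT0 : 0 ≤ T := hT.nonneg fun p => by positivity
  have hLL : 0 < LL w := by
    unfold LL nrm2
    apply Real.sqrt_pos.2
    simp only [dot2, toR2]
    have hd : w.1 ≠ 0 ∨ w.2 ≠ 0 := by
      by_contra! h
      exact hw (Prod.ext h.1 h.2)
    rcases hd with hd | hd
    · have : (w.1:ℝ) ≠ 0 := by exact_mod_cast hd
      have : 0 < (w.1:ℝ) * w.1 := mul_self_pos.2 this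
      linarith [mul_self_nonneg (w.2:ℝ)]
    · have : (w.2:ℝ) ≠ 0 := by exact_mod_cast hd
      have : 0 < (w.2:ℝ) * w.2 := mul_self_pos.2 this
      linarith [mul_self_nonneg (w.1:ℝ)]
  set B := R * LL w * e / (2 * π * hb ^ 2) with hB
  have hB0 : 0 ≤ B := by positivity
  obtain ⟨S, hS, hSle⟩ := strip_sum w hw (√hb) (dot2 (toR2 (perpZ w)) (hb⁻¹ • ξ₀)) B hs hs1 hB0
  have hpsi : ∀ m, ‖psiF φ x₀ ξ₀ hb m‖ = √hb * ‖FT φ (√hb • (toR2 m - hb⁻¹ • ξ₀))‖ := by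
    intro m
    unfold psiF
    rw [norm_mul, norm_mul, norm_expI, mul_one, Complex.norm_real, Real.norm_of_nonneg hs.le]
  have hFT : ∀ ξ, ‖FT φ ξ‖ ≤ Cf := by
    intro ξ
    refine (hCf ξ).trans (mul_le_of_le_one_right hCf0 (inv_le_one_of_one_le₀ ?_))
    nlinarith [sq_nonneg (dot2 (toR2 (perpZ w)) ξ)]
  have hS2 := hS.mul_left (Cf ^ 2 * Ca * T * hb)
  refine (tsum_of_norm_bounded hS2 ?_).trans (by gcongr)
  intro m
  set I : ℝ := if |((m.1 * w.1 + m.2 * w.2 : ℤ) : ℝ)| ≤ B then (1:ℝ) else 0 with hI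
  set D : ℝ := (1 + (√hb * (((-w.2 * m.1 + w.1 * m.2 : ℤ) : ℝ) -
    dot2 (toR2 (perpZ w)) (hb⁻¹ • ξ₀))) ^ 2)⁻¹ with hD
  have hD0 : 0 ≤ D := by positivity
  have hI0 : 0 ≤ I := by rw [hI]; split_ifs <;> norm_num
  have h1 : ‖psiF φ x₀ ξ₀ hb m‖ ≤ √hb * (Cf * D) := by
    rw [hpsi]
    gcongr
    refine (hCf _).trans_eq ?_
    rw [hD]
    congr 4
    simp only [dot2, toR2, perpZ, Prod.smul_fst, Prod.smul_snd, Prod.fst_sub, Prod.snd_sub,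
      smul_eq_mul]
    push_cast
    ring
  have h2 : ∀ m', ‖psiF φ x₀ ξ₀ hb m'‖ ≤ √hb * Cf := by
    intro m'
    rw [hpsi]
    gcongr
    exact hFT _
  have h3 : ∀ c : ℤ, ‖fcoef a (c • w) (2 * π * hb ^ 2 / e * HH w (toR2 m))‖ ≤
      I * (Ca * (1 + (c:ℝ) ^ 2)⁻¹) := by
    intro c
    rw [hI]
    split_ifs with h
    · rw [one_mul]; exact hCa _ _
    · rw [fcoef_zero a R hR, norm_zero, zero_mul]
      push Not at h
      have hH : HH w (toR2 m) = ((m.1 * w.1 + m.2 * w.2 : ℤ) : ℝ) / LL w := by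
        simp only [HH, dot2, toR2]; push_cast; ring
      rw [hH, abs_mul, abs_div _ (LL w), abs_of_pos hLL,
        abs_of_pos (show 0 < 2 * π * hb ^ 2 / e by positivity)]
      calc R = 2 * π * hb ^ 2 / e * (B / LL w) := by rw [hB]; field_simp
        _ ≤ _ := by gcongr
  have hterm := hT.mul_left ((√hb * (Cf * D)) * (√hb * Cf) * (I * Ca))
  refine (tsum_of_norm_bounded hterm ?_).trans_eq ?_
  · intro c
    rw [norm_mul, norm_mul, RCLike.norm_conj]
    calc _ ≤ (√hb * (Cf * D)) * (√hb * Cf) * (I * (Ca * (1 + (c:ℝ) ^ 2)⁻¹)) := by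
          gcongr
          · exact h2 _
          · exact h3 c
      _ = _ := by ring
  · calc _ = Cf ^ 2 * Ca * T * (√hb * √hb) * (I * D) := by ring
      _ = _ := by rw [hss]

/-- coherent states, small perturbations `hb² ≪ ε_hb ≪ hb^{3/2}`:
the two-microlocal quantities of a periodized coherent state with `ξ₀ ≠ 0`
tend to `0` for every primitive rank-1 sublattice. -/
theorem stmt4
    (ε : ℝ → ℝ) (hεpos : ∀ hb ∈ Set.Ioc (0:ℝ) 1, 0 < ε hb)
    (hε2 : Tendsto (fun hb => ε hb / hb ^ 2) (𝓝[>] (0:ℝ)) atTop)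
    (hε32 : Tendsto (fun hb => ε hb / hb ^ ((3:ℝ)/2)) (𝓝[>] (0:ℝ)) (𝓝 0))
    (φ : ℝ × ℝ → ℂ) (hφ_smooth : ContDiff ℝ (⊤ : ℕ∞) φ)
    (hφ_supp : ∀ x : ℝ × ℝ, φ x ≠ 0 → |x.1| < 1/2 ∧ |x.2| < 1/2)
    (hφ_norm : ∫ x : ℝ × ℝ, ‖φ x‖ ^ 2 = 1)
    (x₀ ξ₀ : ℝ × ℝ) (hξ₀ : ξ₀ ≠ 0)
    (a : ℝ × ℝ → ℝ → ℂ)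
    (ha_smooth : ContDiff ℝ (⊤ : ℕ∞) fun p : (ℝ × ℝ) × ℝ => a p.1 p.2)
    (ha_per : ∀ (x : ℝ × ℝ) (η : ℝ) (j : ℤ × ℤ), a (x + toR2 j) η = a x η)
    (ha_supp : ∃ R : ℝ, ∀ (x : ℝ × ℝ) (η : ℝ), R ≤ |η| → a x η = 0) :
    ∀ w : ℤ × ℤ, Primitive w →
      Tendsto (fun hb => Wcs φ x₀ ξ₀ w a hb (ε hb)) (𝓝[>] (0:ℝ)) (𝓝 0) := by
  intro w hwp
  have hw : w ≠ 0 := by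
    rintro rfl
    simp [Primitive] at hwp
  obtain ⟨R', hR'⟩ := ha_supp
  set R := max R' 0 with hRdef
  have hR0 : 0 ≤ R := le_max_right _ _
  have hR : ∀ (x : ℝ × ℝ) (η : ℝ), R ≤ |η| → a x η = 0 :=
    fun x η h => hR' x η ((le_max_left _ _).trans h)
  obtain ⟨Cf, hCf0, hCf⟩ := FT_decay φ hφ_smooth hφ_supp (toR2 (perpZ w))
  obtain ⟨Ca, hCa0, hCa⟩ := fcoef_decay a ha_smooth ha_per R hR w hw
  obtain ⟨T, hT, -⟩ := sum_bound 1 0 one_pos le_rfl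
  simp only [one_mul, sub_zero] at hT
  have hlim : Tendsto (fun hb : ℝ => Cf ^ 2 * Ca * T * (3 * π) *
      (R * LL w / π * (ε hb / hb ^ ((3:ℝ)/2)) + √hb)) (𝓝[>] (0:ℝ)) (𝓝 0) := by
    have hsq : Tendsto (fun hb : ℝ => √hb) (𝓝[>] (0:ℝ)) (𝓝 0) := by
      have := (Real.continuous_sqrt.tendsto 0).mono_left (nhdsWithin_le_nhds (s := Set.Ioi 0))
      simpa using this
    have := ((hε32.const_mul (R * LL w / π)).add hsq).const_mul (Cf ^ 2 * Ca * T * (3 * π))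
    simpa using this
  refine squeeze_zero_norm' ?_ hlim
  filter_upwards [Ioc_mem_nhdsGT (zero_lt_one' ℝ)] with hb hhb
  have hb0 := hhb.1
  refine (Wcs_bound φ x₀ ξ₀ a w hw R hR0 hR Cf hCf0 hCf Ca hCa0 hCa T hT hb (ε hb) hb0 hhb.2
    (hεpos hb hhb)).trans_eq ?_
  have h32 : hb ^ ((3:ℝ)/2) = hb * √hb := by
    rw [Real.sqrt_eq_rpow, show (3:ℝ)/2 = 1 + 1/2 by norm_num, Real.rpow_add hb0, Real.rpow_one]
  have hs : 0 < √hb := Real.sqrt_pos.2 hb0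
  rw [h32]
  obtain ⟨s, hs', rfl⟩ : ∃ s : ℝ, 0 < s ∧ s ^ 2 = hb := ⟨√hb, hs, Real.sq_sqrt hb0.le⟩
  rw [Real.sqrt_sq hs'.le]
  field_simp
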